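/- Let n ≥ 2 be an integer and consider modules over the ring ℤ/nℤ. Suppose given ℤ/n-modules M₀, M₁, M₂, M₃, M₄ and ℤ/n-linear maps φ₁ : M₀ → M₁, φ₂ : M₁ → M₂, φ₃ : M₂ → M₃, φ₄ : M₃ → M₄ such that φ₁ is injective, im(φ₁) = ker(φ₂), im(φ₂) = ker(φ₃), and im(φ₃) = ker(φ₄). Assume that M₀, M₁, M₂ are finite free ℤ/n-modules, say M₀ ≅ (ℤ/n)^{r₀}, M₁ ≅ (ℤ/n)^{r₁}, M₂ ≅ (ℤ/n)^{r₂}. Then r₀ + r₂ ≥ r₁, the submodule ker(φ₄) of M₃ is a free ℤ/n-module of rank r₀ + r₂ − r₁, and ker(φ₄) is a direct summand of M₃: there is a submodule Γ of M₃ with M₃ = ker(φ₄) ⊕ Γ (internal direct sum), and Γ is isomorphic to im(φ₄). -/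

import Mathlib

/-!
The ring `ℤ/n` is self-injective: by Baer's criterion this amounts to the fact that in a proper
quotient of a principal ideal domain, an element killed by the annihilator of `d` is a multiple
of `d`. Hence finite free modules are injective, and a finite free submodule is always a direct
summand. Moreover `ℤ/n` is semilocal, so a finite projective module of constant residual rank is
free; in particular finite free modules can be cancelled from direct sums. Together these give a
rank–nullity theorem for maps out of a finite free module whose kernel is finite free, and the
exact sequence is handled by applying it to `φ₂` and then to `φ₃`.
-/

section Baer

open Module

theorem baer_self_of_forall_dvd {R : Type*} [CommRing R] [IsPrincipalIdealRing R]
    (h : ∀ d y : R, (∀ m, m * d = 0 → m * y = 0) → d ∣ y) : Baer R R := by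
  intro I g
  obtain ⟨d, rfl⟩ := (IsPrincipalIdealRing.principal I).principal
  let d' : Submodule.span R {d} := ⟨d, Submodule.mem_span_singleton_self d⟩
  have annihilator_le (m : R) (hm : m * d = 0) : m * g d' = 0 := by
    have hmd' : m • d' = 0 := Subtype.ext hm
    rw [← smul_eq_mul, ← map_smul, hmd', map_zero]
  obtain ⟨c, hc⟩ := h d (g d') annihilator_le
  refine ⟨LinearMap.mulRight R c, fun x hx ↦ ?_⟩
  obtain ⟨k, rfl⟩ := Submodule.mem_span_singleton.mp hx
  calc k * d * c = k • g d' := by rw [hc, smul_eq_mul, mul_assoc]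
    _ = g (k • d') := (map_smul g k d').symm

variable {R S : Type*} [CommRing R] [IsDomain R] [IsPrincipalIdealRing R] [CommRing S]

theorem dvd_of_surjective_of_ker_ne_bot {f : R →+* S} (hf : Function.Surjective f)
    (hker : RingHom.ker f ≠ ⊥) (d y : S) (h : ∀ m, m * d = 0 → m * y = 0) : d ∣ y := by
  obtain ⟨D, rfl⟩ := hf d
  obtain ⟨Y, rfl⟩ := hf y
  obtain ⟨a, ha⟩ := (IsPrincipalIdealRing.principal (RingHom.ker f)).principal
  have map_eq_zero_iff_dvd (x : R) : f x = 0 ↔ a ∣ x := by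
    rw [← RingHom.mem_ker, ha]
    exact Ideal.mem_span_singleton
  -- `f D` and `f (gcd D a)` generate the same ideal of `S`, whose annihilator is spanned by `f m`.
  obtain ⟨m, hm⟩ := IsBezout.gcd_dvd_right D a
  have hm₀ : m ≠ 0 := by
    rintro rfl
    exact hker (by rw [ha, hm, mul_zero, Submodule.span_zero_singleton])
  have a_dvd_mul : a ∣ m * D := by
    rw [hm, mul_comm]
    exact mul_dvd_mul_left m (IsBezout.gcd_dvd_left D a)
  have gcd_dvd : IsBezout.gcd D a ∣ Y := by
    rw [← mul_dvd_mul_iff_left hm₀, mul_comm m, ← hm, ← map_eq_zero_iff_dvd, map_mul]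
    exact h _ (by rw [← map_mul, map_eq_zero_iff_dvd]; exact a_dvd_mul)
  have map_dvd_map_gcd : f D ∣ f (IsBezout.gcd D a) := by
    obtain ⟨u, v, huv⟩ := IsBezout.gcd_eq_sum D a
    rw [← huv, map_add, map_mul, map_mul, (map_eq_zero_iff_dvd a).mpr dvd_rfl, mul_zero, add_zero]
    exact dvd_mul_left _ _
  exact map_dvd_map_gcd.trans (map_dvd f gcd_dvd)

theorem baer_self_of_surjective_of_ker_ne_bot {f : R →+* S} (hf : Function.Surjective f)
    (hker : RingHom.ker f ≠ ⊥) : Baer S S :=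
  have := IsPrincipalIdealRing.of_surjective f hf
  baer_self_of_forall_dvd (dvd_of_surjective_of_ker_ne_bot hf hker)

theorem baer_zmod_self (n : ℕ) [NeZero n] : Baer (ZMod n) (ZMod n) := by
  refine baer_self_of_surjective_of_ker_ne_bot (f := Int.castRingHom (ZMod n))
    ZMod.intCast_surjective ?_
  rw [ZMod.ker_intCastRingHom, Ne, Ideal.span_singleton_eq_bot]
  exact_mod_cast NeZero.ne n

end Baer

section Splitting

open Module

variable {R M : Type*} [Ring R] [AddCommGroup M] [Module R M]

theorem baer_pi {ι : Type*} {Q : ι → Type*} [∀ i, AddCommGroup (Q i)] [∀ i, Module R (Q i)]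
    (h : ∀ i, Baer R (Q i)) : Baer R (∀ i, Q i) := by
  intro I g
  choose g' hg' using fun i ↦ h i I (LinearMap.proj i ∘ₗ g)
  exact ⟨LinearMap.pi g', fun x hx ↦ funext fun i ↦ hg' i x hx⟩

theorem baer_of_free_of_finite (hR : Baer R R) [Free R M] [Module.Finite R M] : Baer R M :=
  (baer_pi fun _ ↦ hR).of_equiv (Free.chooseBasis R M).equivFun.symm

theorem exists_isCompl_of_baer {p : Submodule R M} (hp : Baer R p) :
    ∃ q : Submodule R M, IsCompl p q := by
  obtain ⟨r, hr⟩ := hp.extension_property p.subtype p.injective_subtype LinearMap.id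
  exact ⟨LinearMap.ker r, LinearMap.isCompl_of_proj (DFunLike.congr_fun hr)⟩

end Splitting

section Cancellation

open Module TensorProduct

variable {R M N : Type*} [CommRing R] [AddCommGroup M] [AddCommGroup N] [Module R M] [Module R N]

theorem finrank_quotient_tensorProduct_prod (P : Ideal R) [P.IsMaximal]
    [Module.Finite R M] [Module.Finite R N] :
    finrank (R ⧸ P) ((R ⧸ P) ⊗[R] (M × N)) =
      finrank (R ⧸ P) ((R ⧸ P) ⊗[R] M) + finrank (R ⧸ P) ((R ⧸ P) ⊗[R] N) := by
  let := Ideal.Quotient.field P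
  rw [(TensorProduct.prodRight R (R ⧸ P) (R ⧸ P) M N).finrank_eq, finrank_prod]

theorem free_of_free_prod [Finite (MaximalSpectrum R)] [Free R M] [Free R (M × N)]
    [Module.Finite R (M × N)] : Free R N := by
  have : Module.Finite R M := .of_surjective (LinearMap.fst R M N) LinearMap.fst_surjective
  have : Module.Finite R N := .of_surjective (LinearMap.snd R M N) LinearMap.snd_surjective
  have : Projective R N := .of_split (LinearMap.inr R M N) (LinearMap.snd R M N) (by ext; simp)
  refine free_of_flat_of_finrank_eq R N (finrank R (M × N) - finrank R M) fun P ↦ ?_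
  have : Nontrivial R := (Ideal.Quotient.mk P.1).domain_nontrivial
  have residual_rank_add := finrank_quotient_tensorProduct_prod (M := M) (N := N) P.1
  rw [finrank_baseChange, finrank_baseChange] at residual_rank_add
  exact (Nat.sub_eq_of_eq_add' residual_rank_add).symm

end Cancellation

section RankNullity

open Module

theorem nonempty_linearEquiv_fin_iff {R M : Type*} [Ring R] [StrongRankCondition R]
    [AddCommGroup M] [Module R M] {r : ℕ} :
    Nonempty (M ≃ₗ[R] (Fin r → R)) ↔ Free R M ∧ Module.Finite R M ∧ finrank R M = r where
  mp := fun ⟨e⟩ ↦ ⟨.of_equiv e.symm, .equiv e.symm, e.finrank_eq.trans (finrank_fin_fun R)⟩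
  mpr := fun ⟨_, _, h⟩ ↦ ⟨(finBasisOfFinrankEq R M h).equivFun⟩

theorem nonempty_ker_prod_range_linearEquiv {R M N : Type*} [Ring R] [AddCommGroup M]
    [AddCommGroup N] [Module R M] [Module R N] (f : M →ₗ[R] N)
    (hf : Baer R (LinearMap.ker f)) :
    Nonempty ((LinearMap.ker f × LinearMap.range f) ≃ₗ[R] M) := by
  obtain ⟨q, hq⟩ := exists_isCompl_of_baer hf
  exact ⟨(LinearEquiv.refl R _).prodCongr (f.kerComplementEquivRange hq.symm).symm ≪≫ₗ
    Submodule.prodEquivOfIsCompl _ q hq⟩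

variable {R M N : Type*} [CommRing R] [Finite (MaximalSpectrum R)] [AddCommGroup M]
  [AddCommGroup N] [Module R M] [Module R N] [Free R M] [Module.Finite R M]

theorem free_range_of_free_ker (hR : Baer R R) (f : M →ₗ[R] N) [Free R (LinearMap.ker f)]
    [Module.Finite R (LinearMap.ker f)] : Free R (LinearMap.range f) := by
  obtain ⟨e⟩ := nonempty_ker_prod_range_linearEquiv f (baer_of_free_of_finite hR)
  have : Free R (LinearMap.ker f × LinearMap.range f) := .of_equiv e.symm
  have : Module.Finite R (LinearMap.ker f × LinearMap.range f) := .equiv e.symm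
  exact free_of_free_prod (M := LinearMap.ker f)

theorem finrank_ker_add_finrank_range_of_free_ker [Nontrivial R] (hR : Baer R R) (f : M →ₗ[R] N)
    [Free R (LinearMap.ker f)] [Module.Finite R (LinearMap.ker f)] :
    finrank R (LinearMap.ker f) + finrank R (LinearMap.range f) = finrank R M := by
  obtain ⟨e⟩ := nonempty_ker_prod_range_linearEquiv f (baer_of_free_of_finite hR)
  have := free_range_of_free_ker hR f
  rw [← finrank_prod, e.finrank_eq]

end RankNullity

theorem exists_free_kernel_and_complement_general
    {R M₀ M₁ M₂ M₃ M₄ : Type*} [CommRing R] [Nontrivial R] [Finite (MaximalSpectrum R)]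
    (hR : Module.Baer R R)
    [AddCommGroup M₀] [AddCommGroup M₁] [AddCommGroup M₂] [AddCommGroup M₃] [AddCommGroup M₄]
    [Module R M₀] [Module R M₁] [Module R M₂] [Module R M₃] [Module R M₄]
    (φ₁ : M₀ →ₗ[R] M₁) (φ₂ : M₁ →ₗ[R] M₂) (φ₃ : M₂ →ₗ[R] M₃) (φ₄ : M₃ →ₗ[R] M₄)
    (hφ₁ : Function.Injective φ₁)
    (h₁₂ : LinearMap.range φ₁ = LinearMap.ker φ₂)
    (h₂₃ : LinearMap.range φ₂ = LinearMap.ker φ₃)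
    (h₃₄ : LinearMap.range φ₃ = LinearMap.ker φ₄)
    {r₀ r₁ r₂ : ℕ}
    (e₀ : Nonempty (M₀ ≃ₗ[R] (Fin r₀ → R)))
    (e₁ : Nonempty (M₁ ≃ₗ[R] (Fin r₁ → R)))
    (e₂ : Nonempty (M₂ ≃ₗ[R] (Fin r₂ → R))) :
    r₁ ≤ r₀ + r₂ ∧
    Nonempty (LinearMap.ker φ₄ ≃ₗ[R] (Fin (r₀ + r₂ - r₁) → R)) ∧
    ∃ Γ : Submodule R M₃,
      IsCompl (LinearMap.ker φ₄) Γ ∧ Nonempty (Γ ≃ₗ[R] LinearMap.range φ₄) := by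
  let e : M₀ ≃ₗ[R] LinearMap.ker φ₂ := .ofInjective φ₁ hφ₁ ≪≫ₗ .ofEq _ _ h₁₂
  obtain ⟨_, _, rank_ker₂⟩ := nonempty_linearEquiv_fin_iff.mp (e₀.map (e.symm ≪≫ₗ ·))
  obtain ⟨_, _, rank₁⟩ := nonempty_linearEquiv_fin_iff.mp e₁
  obtain ⟨_, _, rank₂⟩ := nonempty_linearEquiv_fin_iff.mp e₂
  have rank_nullity₂ := finrank_ker_add_finrank_range_of_free_ker hR φ₂
  have : Module.Free R (LinearMap.ker φ₃) := h₂₃ ▸ free_range_of_free_ker hR φ₂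
  have : Module.Finite R (LinearMap.ker φ₃) := h₂₃ ▸ inferInstance
  have rank_nullity₃ := finrank_ker_add_finrank_range_of_free_ker hR φ₃
  have : Module.Free R (LinearMap.ker φ₄) := h₃₄ ▸ free_range_of_free_ker hR φ₃
  have : Module.Finite R (LinearMap.ker φ₄) := h₃₄ ▸ inferInstance
  obtain ⟨Γ, hΓ⟩ := exists_isCompl_of_baer (baer_of_free_of_finite hR (M := LinearMap.ker φ₄))
  rw [h₂₃] at rank_nullity₂
  rw [h₃₄] at rank_nullity₃
  exact ⟨by lia, nonempty_linearEquiv_fin_iff.mpr ⟨‹_›, ‹_›, by lia⟩,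
    Γ, hΓ, ⟨φ₄.kerComplementEquivRange hΓ.symm⟩⟩

/-- **Free complements in exact sequences of `ℤ/n`-modules** (Brussel–Tengan).
Given an exact sequence `0 → M₀ → M₁ → M₂ → M₃ → M₄` of `ℤ/n`-modules (`n ≥ 2`) whose
first three terms are finite free of ranks `r₀`, `r₁`, `r₂`, one has `r₁ ≤ r₀ + r₂`, the
kernel of `φ₄ : M₃ → M₄` is a free `ℤ/n`-module of rank `r₀ + r₂ - r₁`, and it is a direct
summand of `M₃` with a complement `Γ` isomorphic to the image of `φ₄`. -/
theorem exists_free_kernel_and_complement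
    (n : ℕ) (hn : 2 ≤ n)
    (M₀ M₁ M₂ M₃ M₄ : Type*)
    [AddCommGroup M₀] [AddCommGroup M₁] [AddCommGroup M₂] [AddCommGroup M₃] [AddCommGroup M₄]
    [Module (ZMod n) M₀] [Module (ZMod n) M₁] [Module (ZMod n) M₂] [Module (ZMod n) M₃]
    [Module (ZMod n) M₄]
    (φ₁ : M₀ →ₗ[ZMod n] M₁) (φ₂ : M₁ →ₗ[ZMod n] M₂) (φ₃ : M₂ →ₗ[ZMod n] M₃)
    (φ₄ : M₃ →ₗ[ZMod n] M₄)
    (hφ₁ : Function.Injective φ₁)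
    (h₁₂ : LinearMap.range φ₁ = LinearMap.ker φ₂)
    (h₂₃ : LinearMap.range φ₂ = LinearMap.ker φ₃)
    (h₃₄ : LinearMap.range φ₃ = LinearMap.ker φ₄)
    (r₀ r₁ r₂ : ℕ)
    (e₀ : Nonempty (M₀ ≃ₗ[ZMod n] (Fin r₀ → ZMod n)))
    (e₁ : Nonempty (M₁ ≃ₗ[ZMod n] (Fin r₁ → ZMod n)))
    (e₂ : Nonempty (M₂ ≃ₗ[ZMod n] (Fin r₂ → ZMod n))) :
    r₁ ≤ r₀ + r₂ ∧
    Nonempty ((LinearMap.ker φ₄) ≃ₗ[ZMod n] (Fin (r₀ + r₂ - r₁) → ZMod n)) ∧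
    ∃ Γ : Submodule (ZMod n) M₃,
      IsCompl (LinearMap.ker φ₄) Γ ∧ Nonempty (Γ ≃ₗ[ZMod n] LinearMap.range φ₄) := by
  have : NeZero n := ⟨by lia⟩
  have : Fact (1 < n) := ⟨hn⟩
  exact exists_free_kernel_and_complement_general (baer_zmod_self n) φ₁ φ₂ φ₃ φ₄ hφ₁ h₁₂ h₂₃ h₃₄
    e₀ e₁ e₂
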